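/- Let p ≥ 3 be prime and S ⊆ F_p^2 a set with |S| = p. If S is not a line, then S determines at least (p+3)/2 directions. -/

import Mathlib

open scoped Classical

/-- A direction (one-dimensional subspace `H` of `F_p^2`) is *perfect* with respect to
`w : F_p^2 → ℝ` if every line in this direction (coset of `H`) has `w`-sum equal to
`(1/p)` times the total `w`-sum. -/
def IsPerfect (p : ℕ) [NeZero p] (w : ZMod p × ZMod p → ℝ)
    (H : Submodule (ZMod p) (ZMod p × ZMod p)) : Prop :=
  ∀ a : ZMod p × ZMod p,
    ∑ h : H, w (a + (h : ZMod p × ZMod p)) = (∑ z : ZMod p × ZMod p, w z) / p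

/-- `S` is an (affine) line in `F_p^2`: a coset of a one-dimensional subspace. -/
def IsLine (p : ℕ) (S : Set (ZMod p × ZMod p)) : Prop :=
  ∃ (a : ZMod p × ZMod p) (H : Submodule (ZMod p) (ZMod p × ZMod p)),
    Module.finrank (ZMod p) H = 1 ∧ S = (a + ·) '' (H : Set (ZMod p × ZMod p))

/-- `S` determines the direction of `H` if some line in that direction contains
at least two points of `S`; equivalently, two distinct points of `S` differ by an
element of `H`. -/
def Determines (p : ℕ) (S : Set (ZMod p × ZMod p))
    (H : Submodule (ZMod p) (ZMod p × ZMod p)) : Prop :=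
  ∃ x ∈ S, ∃ y ∈ S, x ≠ y ∧ x - y ∈ H

/-!
If `S` fails to determine some direction, take that direction as the vertical one: `S` becomes the
graph of a function `f` on `ZMod p`, and the slope `m` is not determined exactly when
`x ↦ f x - m * x` is a permutation. For such `m` and `k < p - 1` the power sum
`∑ x, (f x - m * x) ^ k` vanishes. As a polynomial in `m` it has degree less than `k`, so if there
are at least `k` undetermined slopes it is identically zero, and hence `∑ x, x ^ i * f x ^ j = 0`
whenever `i + j = k`. If at most `(p + 1) / 2` directions are determined, this applies to all
`k ≤ (p - 1) / 2`. Suppose that `f`, as a polynomial, has degree `d ≥ 2`. Division with remainder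
`p - 1 = d * j + i` gives a polynomial `X ^ i * f ^ j` of degree exactly `p - 1`, whose sum over
`ZMod p` is minus its leading coefficient; as `i + j ≤ (p - 1) / 2`, this contradicts the vanishing
of the moments. So `f` is affine, and `S` is a line.
-/

section FiniteField

open Polynomial Finset

variable {K : Type*} [Field K] [Fintype K]

lemma sum_eval_eq_neg_coeff {P : K[X]} (hP : P.natDegree < Fintype.card K) :
    ∑ x, P.eval x = -P.coeff (Fintype.card K - 1) := by
  have hcard : Fintype.card K - 1 + 1 = Fintype.card K := Nat.sub_add_cancel Fintype.card_pos
  have htop : ∑ x : K, x ^ (Fintype.card K - 1) = -1 := by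
    have hpow (x : K) : x ^ (Fintype.card K - 1) = 1 - if x = 0 then 1 else 0 := by
      split_ifs with hx
      · rw [hx, zero_pow (Nat.sub_ne_zero_of_lt Fintype.one_lt_card), sub_self]
      · rw [FiniteField.pow_card_sub_one_eq_one x hx, sub_zero]
    simp [hpow]
  have hlow : ∀ i ∈ range (Fintype.card K - 1), ∑ x, P.coeff i * x ^ i = 0 := fun i hi ↦ by
    rw [← mul_sum, FiniteField.sum_pow_lt_card_sub_one K i (mem_range.1 hi), mul_zero]
  calc ∑ x, P.eval x
      = ∑ i ∈ range (Fintype.card K - 1 + 1), ∑ x, P.coeff i * x ^ i := by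
        simp_rw [hcard, eval_eq_sum_range' hP]
        exact sum_comm
    _ = -P.coeff (Fintype.card K - 1) := by
        rw [sum_range_succ, sum_eq_zero hlow, ← mul_sum, htop, zero_add, mul_neg_one]

lemma exists_polynomial_eval_eq (f : K → K) :
    ∃ P : K[X], P.degree < Fintype.card K ∧ ∀ x, P.eval x = f x :=
  ⟨Lagrange.interpolate univ id f,
    Lagrange.degree_interpolate_lt f Function.injective_id.injOn,
    fun x ↦ Lagrange.eval_interpolate_at_node f Function.injective_id.injOn (mem_univ x)⟩

/-- The `k`-th power sum of the family `f x - m * x`, `x ∈ K`, as a polynomial in the slope `m`. -/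
noncomputable def slopePowerSum (f : K → K) (k : ℕ) : K[X] :=
  ∑ x, (C (f x) - C x * X) ^ k

lemma eval_slopePowerSum (f : K → K) (k : ℕ) (m : K) :
    (slopePowerSum f k).eval m = ∑ x, (f x - m * x) ^ k := by
  simp [slopePowerSum, eval_finsetSum, mul_comm m]

lemma coeff_slopePowerSum (f : K → K) (k i : ℕ) :
    (slopePowerSum f k).coeff i = (-1) ^ i * k.choose i * ∑ x, x ^ i * f x ^ (k - i) := by
  have hcomp (x : K) : (C (f x) - C x * X) ^ k = ((X + C (f x)) ^ k).comp (C (-x) * X) := by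
    simp only [pow_comp, add_comp, X_comp, C_comp, C_neg]
    ring
  rw [slopePowerSum, finsetSum_coeff, mul_sum]
  refine sum_congr rfl fun x _ ↦ ?_
  rw [hcomp, comp_C_mul_X_coeff, coeff_X_add_C_pow, neg_pow]
  ring

lemma degree_slopePowerSum_lt (f : K → K) {k : ℕ} (hk : k < Fintype.card K - 1) :
    (slopePowerSum f k).degree < k := by
  refine (degree_lt_iff_coeff_zero _ _).2 fun i hi ↦ ?_
  rw [coeff_slopePowerSum]
  obtain rfl | hi := hi.eq_or_lt
  · simp [FiniteField.sum_pow_lt_card_sub_one K k hk]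
  · simp [Nat.choose_eq_zero_of_lt hi]

lemma slopePowerSum_eq_zero {f : K → K} {N : Finset K}
    (hN : ∀ m ∈ N, Function.Injective fun x ↦ f x - m * x) {k : ℕ} (hkN : k ≤ #N)
    (hk : k < Fintype.card K - 1) : slopePowerSum f k = 0 := by
  refine eq_zero_of_degree_lt_of_eval_finset_eq_zero N
    ((degree_slopePowerSum_lt f hk).trans_le (by exact_mod_cast hkN)) fun m hm ↦ ?_
  rw [eval_slopePowerSum, ← FiniteField.sum_pow_lt_card_sub_one K k hk]
  exact (Finite.injective_iff_bijective.1 (hN m hm)).sum_comp (· ^ k)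

lemma sum_pow_mul_pow_eq_zero {f : K → K} {N : Finset K}
    (hN : ∀ m ∈ N, Function.Injective fun x ↦ f x - m * x) {i j : ℕ} (hijN : i + j ≤ #N)
    (hij : i + j < Fintype.card K - 1) (hchoose : ((i + j).choose i : K) ≠ 0) :
    ∑ x, x ^ i * f x ^ j = 0 := by
  have hcoeff := coeff_slopePowerSum f (i + j) i
  rw [slopePowerSum_eq_zero hN hijN hij, coeff_zero, add_tsub_cancel_left] at hcoeff
  exact (mul_eq_zero.1 hcoeff.symm).resolve_left
    (mul_ne_zero (pow_ne_zero _ (neg_ne_zero.2 one_ne_zero)) hchoose)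

end FiniteField

lemma two_mul_mod_add_div_le {n d : ℕ} (hn : Even n) (hd : 2 ≤ d) (hdn : d ≤ n) :
    2 * (n % d + n / d) ≤ n := by
  obtain ⟨c, rfl⟩ := Nat.exists_eq_add_of_le hd
  obtain ⟨a, ha⟩ := Nat.exists_eq_add_of_le (Nat.div_pos hdn (by omega))
  have hmod : n % (2 + c) < 2 + c := Nat.mod_lt n (by omega)
  have hdiv : (2 + c) * (1 + a) + n % (2 + c) = n := ha ▸ Nat.div_add_mod n (2 + c)
  rw [ha]
  obtain ⟨k, hk⟩ := hn
  -- With `n = d * q + r`, `d = 2 + c` and `q = 1 + a`, the claim is `r ≤ (d - 2) * q`. As `r < d`,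
  -- it can fail only if `r = d - 1` and `d = 2` or `q = 1`, but in these cases `n` is odd.
  rcases Nat.eq_zero_or_pos c with rfl | hc
  · omega
  rcases Nat.eq_zero_or_pos a with rfl | ha
  · omega
  nlinarith [Nat.mul_le_mul hc ha]

section PrimeField

open Polynomial Finset

variable {p : ℕ} [Fact p.Prime]

lemma natDegree_le_one_of_injective_sub_mul {P : (ZMod p)[X]} (hP : P.degree < p)
    {N : Finset (ZMod p)} (hN : ∀ m ∈ N, Function.Injective fun x ↦ P.eval x - m * x)
    (hcard : p ≤ 2 * #N + 1) : P.natDegree ≤ 1 := by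
  by_contra! hd
  have hp : p.Prime := Fact.out
  have hP0 : P ≠ 0 := ne_zero_of_natDegree_gt hd
  have hPp : P.natDegree < p := (natDegree_lt_iff_degree_lt hP0).2 hP
  have heven : Even (p - 1) := hp.even_sub_one (by omega)
  set a := (p - 1) / P.natDegree
  set b := (p - 1) % P.natDegree
  have hab : 2 * (b + a) ≤ p - 1 := two_mul_mod_add_div_le heven hd (by omega)
  have hdeg : (X ^ b * P ^ a).natDegree = p - 1 := by
    rw [natDegree_mul (pow_ne_zero _ X_ne_zero) (pow_ne_zero _ hP0), natDegree_X_pow,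
      natDegree_pow, mul_comm a]
    exact Nat.mod_add_div _ _
  have hmoment : ∑ x, (X ^ b * P ^ a).eval x = 0 := by
    have hchoose : ((b + a).choose b : ZMod p) ≠ 0 :=
      ((ZMod.isUnit_iff_coprime _ p).2
        (hp.coprime_choose_of_lt (by omega) (Nat.le_add_right b a)).symm).ne_zero
    simpa using sum_pow_mul_pow_eq_zero hN (show b + a ≤ #N by omega)
      (by rw [ZMod.card]; omega) hchoose
  have hlead : (X ^ b * P ^ a).leadingCoeff = 0 := by
    have hsum := sum_eval_eq_neg_coeff (P := X ^ b * P ^ a) (by rw [hdeg, ZMod.card]; omega)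
    rwa [hmoment, ZMod.card, ← hdeg, eq_comm, neg_eq_zero] at hsum
  rw [leadingCoeff_eq_zero.1 hlead, natDegree_zero] at hdeg
  omega

lemma exists_eq_mul_add_of_injective_sub_mul {f : ZMod p → ZMod p} {N : Finset (ZMod p)}
    (hN : ∀ m ∈ N, Function.Injective fun x ↦ f x - m * x) (hcard : p ≤ 2 * #N + 1) :
    ∃ c d, ∀ x, f x = c * x + d := by
  obtain ⟨P, hdeg, hP⟩ := exists_polynomial_eval_eq f
  rw [ZMod.card] at hdeg
  have hlin : P.natDegree ≤ 1 :=
    natDegree_le_one_of_injective_sub_mul hdeg (by simpa only [hP] using hN) hcard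
  obtain ⟨c, d, rfl⟩ := exists_eq_X_add_C_of_natDegree_le_one hlin
  exact ⟨c, d, fun x ↦ by rw [← hP]; simp⟩

end PrimeField

section Dual

open Module

variable {K V : Type*} [Field K] [AddCommGroup V] [Module K V]

lemma exists_dual_ker_eq [FiniteDimensional K V] {H : Submodule K V}
    (hH : finrank K H + 1 = finrank K V) : ∃ φ : Dual K V, φ ≠ 0 ∧ LinearMap.ker φ = H := by
  have hlt : H < ⊤ := lt_top_iff_ne_top.2 fun h ↦ by
    rw [h, finrank_top] at hH
    omega
  obtain ⟨φ, hφ, hle⟩ := H.exists_le_ker_of_lt_top hlt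
  refine ⟨φ, hφ, (Submodule.eq_of_le_of_finrank_eq hle ?_).symm⟩
  have hker := Dual.finrank_ker_add_one_of_ne_zero hφ
  omega

lemma sub_smul_ne_zero_of_linearIndependent {R M : Type*} [Ring R] [Nontrivial R]
    [AddCommGroup M] [Module R M] {x y : M} (h : LinearIndependent R ![x, y]) (m : R) :
    y - m • x ≠ 0 := fun hzero ↦ by
  have hcomb : -m • x + (1 : R) • y = 0 := by rwa [neg_smul, one_smul, neg_add_eq_sub]
  exact one_ne_zero (LinearIndependent.pair_iff.1 h _ _ hcomb).2

lemma ker_sub_smul_injective {φ ψ : Dual K V} (h : LinearIndependent K ![φ, ψ]) :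
    Function.Injective fun m : K ↦ LinearMap.ker (ψ - m • φ) := fun m m' hker ↦ by
  have hle : ⨅ _ : Unit, LinearMap.ker (ψ - m • φ) ≤ LinearMap.ker (ψ - m' • φ) := by
    simpa only [ciInf_const] using hker.le
  obtain ⟨c, hc⟩ : ∃ c : K, c • (ψ - m • φ) = ψ - m' • φ := by
    simpa [Submodule.mem_span_singleton] using mem_span_of_iInf_ker_le_ker hle
  have hzero : (m' - c * m) • φ + (c - 1) • ψ = 0 := by
    rw [← sub_eq_zero.2 hc]
    module
  obtain ⟨hm, hc1⟩ := LinearIndependent.pair_iff.1 h _ _ hzero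
  linear_combination -hm - m * hc1

end Dual

lemma exists_rightInverse_range_eq {α β : Type*} [Finite β] {φ : α → β} {S : Set α}
    (hφ : S.InjOn φ) (hcard : S.ncard = Nat.card β) :
    ∃ g : β → α, Function.RightInverse g φ ∧ Set.range g = S := by
  have himage : φ '' S = Set.univ :=
    Set.eq_univ_iff_ncard _ |>.2 (by rw [hφ.ncard_image, hcard])
  choose g hgS hg using fun b ↦ himage.ge (Set.mem_univ b)
  refine ⟨g, hg, (Set.range_subset_iff.2 hgS).antisymm fun a ha ↦ ⟨φ a, ?_⟩⟩
  exact hφ (hgS _) ha (hg _)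

section Plane

open Module
open scoped Finset

variable {p : ℕ} {S : Set (ZMod p × ZMod p)}

/-- The set of directions determined by `S`, each encoded as the line through the origin in this
direction. -/
def determinedDirections (p : ℕ) (S : Set (ZMod p × ZMod p)) :
    Set (Submodule (ZMod p) (ZMod p × ZMod p)) :=
  {H | finrank (ZMod p) H = 1 ∧ Determines p S H}

lemma determines_ker_iff {χ : Dual (ZMod p) (ZMod p × ZMod p)} :
    Determines p S (LinearMap.ker χ) ↔ ¬ S.InjOn χ := by
  simp only [Determines, Set.InjOn, LinearMap.mem_ker, map_sub, sub_eq_zero]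
  push Not
  tauto

variable [Fact p.Prime]

lemma finrank_ker_eq_one {χ : Dual (ZMod p) (ZMod p × ZMod p)} (hχ : χ ≠ 0) :
    finrank (ZMod p) (LinearMap.ker χ) = 1 := by
  simpa using Dual.finrank_ker_add_one_of_ne_zero hχ

lemma exists_not_determines (h : (determinedDirections p S).ncard < p + 1) :
    ∃ H : Submodule (ZMod p) (ZMod p × ZMod p), finrank (ZMod p) H = 1 ∧ ¬ Determines p S H := by
  by_contra! hall
  have hdir : determinedDirections p S =
      {H : Submodule (ZMod p) (ZMod p × ZMod p) | finrank (ZMod p) H = 1} :=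
    Set.ext fun H ↦ and_iff_left_of_imp (hall H)
  rw [hdir, ← Nat.card_coe_set_eq, Set.coe_ofPred,
    ← Nat.card_congr (Projectivization.equivSubmodule (ZMod p) (ZMod p × ZMod p)),
    Projectivization.card_of_finrank_two _ _ (by simp), Nat.card_zmod] at h
  exact h.false

lemma card_not_injOn_le_ncard_determinedDirections {φ ψ : Dual (ZMod p) (ZMod p × ZMod p)}
    (h : LinearIndependent (ZMod p) ![φ, ψ]) :
    #{m : ZMod p | ¬ S.InjOn (ψ - m • φ)} ≤ (determinedDirections p S).ncard := by
  rw [← Set.ncard_coe_finset]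
  refine Set.ncard_le_ncard_of_injOn (fun m ↦ LinearMap.ker (ψ - m • φ)) (fun m hm ↦ ?_)
    (ker_sub_smul_injective h).injOn
  exact ⟨finrank_ker_eq_one (sub_smul_ne_zero_of_linearIndependent h m),
    determines_ker_iff.2 (by simpa using hm)⟩

lemma isLine_of_forall_apply_eq {χ : Dual (ZMod p) (ZMod p × ZMod p)} (hχ : χ ≠ 0)
    (hcard : S.ncard = p) {d : ZMod p} (hS : ∀ z ∈ S, χ z = d) : IsLine p S := by
  obtain ⟨a, ha⟩ : S.Nonempty := Set.nonempty_of_ncard_ne_zero (by rw [hcard]; exact NeZero.ne p)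
  refine ⟨a, LinearMap.ker χ, finrank_ker_eq_one hχ, Set.eq_of_subset_of_ncard_le ?_ ?_⟩
  · exact fun z hz ↦ ⟨z - a, by simp [hS z hz, hS a ha], add_sub_cancel a z⟩
  · rw [Set.ncard_image_of_injective _ (add_right_injective a), hcard, ← Nat.card_coe_set_eq,
      SetLike.coe_sort_coe, Module.natCard_eq_pow_finrank (K := ZMod p), finrank_ker_eq_one hχ,
      Nat.card_zmod, pow_one]

lemma isLine_of_injOn_sub_smul {φ ψ : Dual (ZMod p) (ZMod p × ZMod p)}
    (h : LinearIndependent (ZMod p) ![φ, ψ]) (hcard : S.ncard = p) (hφ : S.InjOn φ)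
    {N : Finset (ZMod p)} (hN : ∀ m ∈ N, S.InjOn (ψ - m • φ)) (hNcard : p ≤ 2 * #N + 1) :
    IsLine p S := by
  obtain ⟨g, hg, rfl⟩ := exists_rightInverse_range_eq hφ (by rw [hcard, Nat.card_zmod])
  have hinj : ∀ m ∈ N, Function.Injective fun x ↦ ψ (g x) - m * x := fun m hm x y hxy ↦
    hg.injective (hN m hm ⟨x, rfl⟩ ⟨y, rfl⟩ (by simpa [hg _] using hxy))
  obtain ⟨c, d, hcd⟩ := exists_eq_mul_add_of_injective_sub_mul hinj hNcard
  refine isLine_of_forall_apply_eq (sub_smul_ne_zero_of_linearIndependent h c) hcard (d := d) ?_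
  rintro _ ⟨x, rfl⟩
  simp [hcd, hg x]

end Plane

theorem stmt3 (p : ℕ) (hp : p.Prime) (hp3 : 3 ≤ p) [NeZero p]
    (S : Set (ZMod p × ZMod p)) (hcard : S.ncard = p)
    (hline : ¬ IsLine p S) :
    2 * Nat.card {H : Submodule (ZMod p) (ZMod p × ZMod p) //
        Module.finrank (ZMod p) H = 1 ∧ Determines p S H} ≥ p + 3 := by
  have : Fact p.Prime := ⟨hp⟩
  change p + 3 ≤ 2 * (determinedDirections p S).ncard
  by_contra! hlt
  obtain ⟨H, hH, hHS⟩ := exists_not_determines (p := p) (S := S) (by omega)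
  obtain ⟨φ, hφ, rfl⟩ := exists_dual_ker_eq (H := H) (by simp [hH])
  obtain ⟨ψ, hφψ⟩ := exists_linearIndependent_pair_of_one_lt_finrank (R := ZMod p)
    (by rw [Subspace.dual_finrank_eq]; simp) hφ
  have hinj : S.InjOn φ := not_not.1 (mt determines_ker_iff.2 hHS)
  let N : Finset (ZMod p) := {m | S.InjOn (ψ - m • φ)}
  have hNcard : p ≤ 2 * N.card + 1 := by
    have hsplit : N.card + Finset.card {m : ZMod p | ¬ S.InjOn (ψ - m • φ)} = p := by
      rw [Finset.card_filter_add_card_filter_not, Finset.card_univ, ZMod.card]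
    have hle := card_not_injOn_le_ncard_determinedDirections (S := S) hφψ
    obtain ⟨k, hk⟩ := hp.odd_of_ne_two (by omega)
    omega
  exact hline (isLine_of_injOn_sub_smul hφψ hcard hinj
    (fun m hm ↦ (Finset.mem_filter.1 hm).2) hNcard)
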